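/- Let d ≥ 1 and r, s, m ≥ 0. For each i ∈ [m] let R_i ⊆ U_d^{r_i} be a relation and let z_i : [r_i] → [r + s] be a choice of coordinates, and let R ⊆ U_d^r be the relation defined by: (a_1, …, a_r) ∈ R if and only if there exist b_1, …, b_s ∈ U_d such that for every i ∈ [m] the tuple (c_{z_i(1)}, …, c_{z_i(r_i)}) belongs to R_i, where (c_1, …, c_{r+s}) = (a_1, …, a_r, b_1, …, b_s). For each relation Q ⊆ U_d^t fix a polynomial P_Q ∈ ℂ[x_1,…,x_t] representing Q. Let A_1, …, A_r be pairwise commuting normal complex n×n matrices with A_j^d = I for all j and P_R(A_1, …, A_r) = I. Then there exist normal complex n×n matrices B_1, …, B_s with B_j^d = I for all j such that all of A_1, …, A_r, B_1, …, B_s pairwise commute and, setting (C_1, …, C_{r+s}) = (A_1, …, A_r, B_1, …, B_s), for every i ∈ [m] one has P_{R_i}(C_{z_i(1)}, …, C_{z_i(r_i)}) = I. -/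

import Mathlib

/-!
All polynomial identities that hold at every point of `U_d ^ r` can be transported to commuting
matrices `A j` with `A j ^ d = 1`: by Alon's combinatorial Nullstellensatz such an identity lies in
the ideal generated by the `X j ^ d - 1` (`aeval_eq_zero_of_forall_root`). Hence no
diagonalization is needed.

For each point `a` of `U_d ^ r` choose `b(a)` in `U_d ^ s`, a witness for `a ∈ R` if there is one.
Interpolating `a ↦ b(a)` gives polynomials `g j` (`exists_interpolation`), and `B j := g j (A)`.
The identity `g j ^ d = 1` on `U_d ^ r` gives `B j ^ d = 1`. With `q` the polynomial `P_{R_i} - 1`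
evaluated at `(X, g)` and `λ₁ = exp (2πi/d)`, the polynomial `q * (P_R - λ₁)` vanishes on `U_d ^ r`:
the first factor is zero on `R`, the second one off `R`. At `A` the second factor is the scalar
`1 - λ₁`, so `q (A) = 0` as soon as `λ₁ ≠ 1`; if `λ₁ = 1` then `q` itself vanishes on `U_d ^ r`.

By Fuglede's theorem the star subalgebra generated by the `A j` is commutative. The whole argument
takes place in it, and so the `B j` are normal and commute with everything in sight.
-/

open scoped BigOperators

/-- Evaluation of a multivariate polynomial over `ℂ` at a family of (pairwise commuting)
elements of a `ℂ`-algebra, defined by summing monomials. -/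
noncomputable def mvEval {r : ℕ} {A : Type*} [Ring A] [Algebra ℂ A]
    (f : Fin r → A) (Q : MvPolynomial (Fin r) ℂ) : A :=
  ∑ m ∈ Q.support, Q.coeff m • (List.ofFn (fun i => f i ^ (m i))).prod

open MvPolynomial in
/-- A polynomial vanishing on `U_d ^ r` lies in the ideal generated by the `X j ^ d - 1`, hence
vanishes at every tuple of elements of a commutative algebra whose `d`-th powers are `1`. -/
lemma aeval_eq_zero_of_forall_root {d r : ℕ} (hd : 1 ≤ d) {S : Type*} [CommRing S] [Algebra ℂ S]
    (a : Fin r → S) (ha : ∀ j, a j ^ d = 1) (p : MvPolynomial (Fin r) ℂ)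
    (hp : ∀ x : Fin r → ℂ, (∀ j, x j ^ d = 1) → eval x p = 0) : aeval a p = 0 := by
  obtain ⟨h, -, hh⟩ := combinatorial_nullstellensatz_exists_linearCombination
    (fun _ : Fin r => Polynomial.nthRootsFinset d (1 : ℂ))
    (fun _ => ⟨1, by simp [Polynomial.mem_nthRootsFinset hd]⟩) p
    (fun x hx => hp x fun j => (Polynomial.mem_nthRootsFinset hd 1).1 (hx j))
  have key : ∀ j, aeval a (∏ u ∈ Polynomial.nthRootsFinset d (1 : ℂ),
      (X j - C u : MvPolynomial (Fin r) ℂ)) = 0 := by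
    intro j
    have h2 := congrArg (Polynomial.aeval (a j)) (Polynomial.X_pow_sub_one_eq_prod (R := ℂ) hd
      (Complex.isPrimitiveRoot_exp d (by omega)))
    simp only [map_sub, map_pow, Polynomial.aeval_X, map_one, ha, sub_self, map_prod,
      Polynomial.aeval_C] at h2
    simpa [map_prod, algHom_C] using h2.symm
  rw [hh, Finsupp.linearCombination_apply, Finsupp.sum, map_sum]
  refine Finset.sum_eq_zero fun j _ => ?_
  rw [smul_eq_mul, map_mul, key, mul_zero]

open MvPolynomial in
/-- Interpolation on the grid `U_d ^ r`, by sums of products of univariate Lagrange basis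
polynomials. -/
lemma exists_interpolation {d r : ℕ} (hd : 1 ≤ d) (f : (Fin r → ℂ) → ℂ) :
    ∃ g : MvPolynomial (Fin r) ℂ, ∀ x : Fin r → ℂ, (∀ j, x j ^ d = 1) → eval x g = f x := by
  classical
  set U := Polynomial.nthRootsFinset d (1 : ℂ) with hU
  refine ⟨∑ y ∈ Fintype.piFinset (fun _ : Fin r => U),
    C (f y) * ∏ j, Polynomial.aeval (X j) (Lagrange.basis U id (y j)), fun x hx => ?_⟩
  have hxU : ∀ j, x j ∈ U := fun j => (Polynomial.mem_nthRootsFinset hd 1).2 (hx j)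
  have hev : ∀ (j : Fin r) (q : Polynomial ℂ),
      eval x (Polynomial.aeval (X j : MvPolynomial (Fin r) ℂ) q) = q.eval (x j) := by
    intro j q
    have := Polynomial.aeval_algHom_apply (aeval x : MvPolynomial (Fin r) ℂ →ₐ[ℂ] ℂ) (X j) q
    simpa [aeval_eq_eval, Polynomial.coe_aeval_eq_eval] using this.symm
  simp only [map_sum, map_mul, map_prod, eval_C, hev]
  rw [Finset.sum_eq_single x]
  · rw [Finset.prod_eq_one, mul_one]
    intro j _
    exact Lagrange.eval_basis_self (v := id) (Set.injOn_id _) (hxU j)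
  · intro y _ hyx
    obtain ⟨j, hj⟩ := Function.ne_iff.1 hyx
    rw [Finset.prod_eq_zero (Finset.mem_univ j), mul_zero]
    exact Lagrange.eval_basis_of_ne (v := id) hj (hxU j)
  · intro h
    exact absurd (Fintype.mem_piFinset.2 hxU) h

open MvPolynomial in
/-- The extension theorem over a commutative `ℂ`-algebra, with no normality condition. -/
lemma exists_extension {d r s m : ℕ} (hd : 1 ≤ d)
    (ar : Fin m → ℕ)
    (Rel : (i : Fin m) → Set (Fin (ar i) → ℂ))
    (z : (i : Fin m) → Fin (ar i) → Fin (r + s))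
    (R : Set (Fin r → ℂ))
    (hR : ∀ a : Fin r → ℂ, (∀ j, a j ^ d = 1) →
      (a ∈ R ↔ ∃ b : Fin s → ℂ, (∀ j, b j ^ d = 1) ∧
        ∀ i, (fun t => Fin.append a b (z i t)) ∈ Rel i))
    (PR : (i : Fin m) → MvPolynomial (Fin (ar i)) ℂ)
    (μ : ℂ)
    (hPR : ∀ i, ∀ a : Fin (ar i) → ℂ, (∀ t, a t ^ d = 1) →
      ((a ∈ Rel i → eval a (PR i) = 1) ∧ (a ∉ Rel i → eval a (PR i) = μ)))
    (P : MvPolynomial (Fin r) ℂ)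
    (hP : ∀ a : Fin r → ℂ, (∀ j, a j ^ d = 1) →
      ((a ∈ R → eval a P = 1) ∧ (a ∉ R → eval a P = μ)))
    {S : Type*} [CommRing S] [Algebra ℂ S]
    (a : Fin r → S) (ha : ∀ j, a j ^ d = 1) (hsat : aeval a P = 1) :
    ∃ b : Fin s → S, (∀ j, b j ^ d = 1) ∧
      ∀ i, aeval (fun t => Fin.append a b (z i t)) (PR i) = 1 := by
  classical
  have hb : ∀ x : Fin r → ℂ, ∃ b : Fin s → ℂ, (∀ j, b j ^ d = 1) ∧
      ((∀ j, x j ^ d = 1) → x ∈ R → ∀ i, (fun t => Fin.append x b (z i t)) ∈ Rel i) := by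
    intro x
    by_cases hx : (∀ j, x j ^ d = 1) ∧ x ∈ R
    · obtain ⟨b, h1, h2⟩ := (hR x hx.1).1 hx.2
      exact ⟨b, h1, fun _ _ => h2⟩
    · exact ⟨fun _ => 1, fun _ => one_pow d, fun h1 h2 => absurd ⟨h1, h2⟩ hx⟩
  choose β hβ1 hβ2 using hb
  choose g hg using fun j : Fin s => exists_interpolation (r := r) hd fun x => β x j
  have happ : ∀ k : Fin (r + s),
      aeval a (Fin.append X g k) = Fin.append a (fun j => aeval a (g j)) k := by
    intro k
    refine Fin.addCases (fun i => ?_) (fun i => ?_) k <;> simp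
  have happC : ∀ (x : Fin r → ℂ), (∀ j, x j ^ d = 1) → ∀ k : Fin (r + s),
      eval x (Fin.append X g k) = Fin.append x (β x) k := by
    intro x hx k
    refine Fin.addCases (fun i => ?_) (fun i => ?_) k <;> simp [hg _ x hx]
  refine ⟨fun j => aeval a (g j), fun j => ?_, fun i => ?_⟩
  · have := aeval_eq_zero_of_forall_root hd a ha (g j ^ d - 1)
      (fun x hx => by simp [hg j x hx, hβ1])
    simpa [sub_eq_zero] using this
  · set q : MvPolynomial (Fin r) ℂ := aeval (fun t => Fin.append X g (z i t)) (PR i) - 1 with hq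
    have hqa : aeval a q = aeval (fun t => Fin.append a (fun j => aeval a (g j)) (z i t)) (PR i)
        - 1 := by
      rw [hq, map_sub, map_one, comp_aeval_apply]
      simp only [happ]
    have hqC : ∀ x : Fin r → ℂ, (∀ j, x j ^ d = 1) →
        eval x q = eval (fun t => Fin.append x (β x) (z i t)) (PR i) - 1 := by
      intro x hx
      rw [hq, map_sub, map_one, ← coe_aeval_eq_eval, RingHom.coe_coe, comp_aeval_apply]
      simp only [aeval_eq_eval, happC x hx]
    have hroot : ∀ x : Fin r → ℂ, (∀ j, x j ^ d = 1) → ∀ t,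
        Fin.append x (β x) (z i t) ^ d = 1 := by
      intro x hx t
      refine Fin.addCases (fun k => ?_) (fun k => ?_) (z i t) <;> simp [hx, hβ1]
    suffices h : aeval a q = 0 by rwa [hqa, sub_eq_zero] at h
    by_cases hμ : μ = 1
    · refine aeval_eq_zero_of_forall_root hd a ha q fun x hx => ?_
      rw [hqC x hx, sub_eq_zero]
      have := hPR i _ (hroot x hx)
      rw [hμ] at this
      exact (em _).elim this.1 this.2
    · have h := aeval_eq_zero_of_forall_root hd a ha (q * (P - C μ)) fun x hx => by
        by_cases hxR : x ∈ R
        · rw [map_mul, hqC x hx, (hPR i _ (hroot x hx)).1 (hβ2 x hx hxR i), sub_self, zero_mul]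
        · rw [map_mul, map_sub _ P, (hP x hx).2 hxR, eval_C, sub_self, mul_zero]
      have h1 : (1 : S) - algebraMap ℂ S μ = algebraMap ℂ S (1 - μ) := by simp
      rw [map_mul, map_sub _ P, hsat, algHom_C, h1, mul_comm, ← Algebra.smul_def] at h
      -- `1 - μ` is a nonzero scalar, so it can be cancelled.
      have h2 := congrArg ((1 - μ)⁻¹ • ·) h
      simpa [smul_smul, inv_mul_cancel₀ (sub_ne_zero.2 (Ne.symm hμ))] using h2

/-- On elements coming from a commutative algebra the monomial-by-monomial evaluation is the usual
`MvPolynomial.aeval`. -/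
lemma mvEval_map {r : ℕ} {A S : Type*} [Ring A] [Algebra ℂ A] [CommRing S] [Algebra ℂ S]
    (φ : S →ₐ[ℂ] A) (f : Fin r → S) (Q : MvPolynomial (Fin r) ℂ) :
    mvEval (fun i => φ (f i)) Q = φ (MvPolynomial.aeval f Q) := by
  rw [mvEval, MvPolynomial.aeval_def, MvPolynomial.eval₂_eq', map_sum]
  refine Finset.sum_congr rfl fun k _ => ?_
  rw [← Algebra.smul_def, map_smul, ← List.prod_ofFn, map_list_prod, List.map_ofFn]
  simp [Function.comp_def]

open scoped Matrix.Norms.L2Operator in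
/-- Fuglede's theorem for complex matrices. -/
lemma commute_star_of_normal {n : ℕ} {M N : Matrix (Fin n) (Fin n) ℂ}
    (hN : N * star N = star N * N) (h : M * N = N * M) : M * star N = star N * M :=
  IsStarNormal.commute_star_right (a := N) (x := M) ⟨hN.symm⟩ h

theorem stmt14 (d r s m n : ℕ) (hd : 1 ≤ d)
    (ar : Fin m → ℕ)
    (Rel : (i : Fin m) → Set (Fin (ar i) → ℂ))
    (z : (i : Fin m) → Fin (ar i) → Fin (r + s))
    (R : Set (Fin r → ℂ))
    (hR : ∀ a : Fin r → ℂ, (∀ j, a j ^ d = 1) →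
      (a ∈ R ↔ ∃ b : Fin s → ℂ, (∀ j, b j ^ d = 1) ∧
        ∀ i, (fun t => Fin.append a b (z i t)) ∈ Rel i))
    (PR : (i : Fin m) → MvPolynomial (Fin (ar i)) ℂ)
    (hPR : ∀ i, ∀ a : Fin (ar i) → ℂ, (∀ t, a t ^ d = 1) →
      ((a ∈ Rel i → MvPolynomial.eval a (PR i) = 1) ∧
       (a ∉ Rel i → MvPolynomial.eval a (PR i) = Complex.exp (2 * Real.pi * Complex.I / d))))
    (P : MvPolynomial (Fin r) ℂ)
    (hP : ∀ a : Fin r → ℂ, (∀ j, a j ^ d = 1) →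
      ((a ∈ R → MvPolynomial.eval a P = 1) ∧
       (a ∉ R → MvPolynomial.eval a P = Complex.exp (2 * Real.pi * Complex.I / d))))
    (A : Fin r → Matrix (Fin n) (Fin n) ℂ)
    (hcomm : ∀ i j, A i * A j = A j * A i)
    (hnormal : ∀ i, A i * star (A i) = star (A i) * A i)
    (horder : ∀ i, A i ^ d = 1)
    (hsat : mvEval A P = 1) :
    ∃ B : Fin s → Matrix (Fin n) (Fin n) ℂ,
      (∀ j, B j * star (B j) = star (B j) * B j) ∧
      (∀ j, B j ^ d = 1) ∧
      (∀ i j, Fin.append A B i * Fin.append A B j = Fin.append A B j * Fin.append A B i) ∧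
      (∀ i, mvEval (fun t => Fin.append A B (z i t)) (PR i) = 1) := by
  have hmc : IsMulCommutative (StarAlgebra.adjoin ℂ (Set.range A)) := by
    refine StarAlgebra.isMulCommutative_adjoin ℂ ?_ ?_
    · rintro _ ⟨i, rfl⟩ _ ⟨j, rfl⟩
      exact hcomm i j
    · rintro _ ⟨i, rfl⟩ _ ⟨j, rfl⟩
      exact commute_star_of_normal (hnormal j) (hcomm i j)
  open scoped IsMulCommutative in
  let φ : StarAlgebra.adjoin ℂ (Set.range A) →ₐ[ℂ] Matrix (Fin n) (Fin n) ℂ :=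
    (StarAlgebra.adjoin ℂ (Set.range A)).toSubalgebra.val
  have hφ : Function.Injective φ := Subtype.val_injective
  let a : Fin r → StarAlgebra.adjoin ℂ (Set.range A) :=
    fun j => ⟨A j, StarAlgebra.subset_adjoin ℂ _ ⟨j, rfl⟩⟩
  have hsat' : MvPolynomial.aeval a P = 1 := by
    apply hφ
    rw [← mvEval_map, map_one]
    exact hsat
  obtain ⟨b, hb1, hb2⟩ := exists_extension hd ar Rel z R hR PR _ hPR P hP a
    (fun j => Subtype.ext (horder j)) hsat'
  have happ : ∀ k, Fin.append A (fun j => φ (b j)) k = φ (Fin.append a b k) := by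
    intro k
    refine Fin.addCases (fun i => ?_) (fun i => ?_) k <;> simp [φ, a]
  refine ⟨fun j => φ (b j), fun j => ?_, fun j => ?_, fun i j => ?_, fun i => ?_⟩
  · exact congrArg φ (mul_comm (b j) (star (b j)))
  · rw [← map_pow, hb1, map_one]
  · rw [happ, happ, ← map_mul, mul_comm, map_mul]
  · simp only [happ]
    rw [mvEval_map, hb2, map_one]
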